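/- For all real numbers x and z the following are equivalent: (a) for all real u, v, w one has (1 + (u + ix)² + v²)² + (w + i(z + 2xv))² ≠ 0 (an equation between complex numbers, i denoting the imaginary unit); (b) 2x² + |z| < 1. -/

import Mathlib

/-- For all real `x`, `z`, the nonvanishing condition
`(1 + (u + ix)² + v²)² + (w + i(z + 2xv))² ≠ 0` for all real `u, v, w`
is equivalent to `2x² + |z| < 1`. -/
theorem stmt_16 (x z : ℝ) :
    (∀ u v w : ℝ,
      (1 + ((u : ℂ) + (x : ℂ) * Complex.I) ^ 2 + (v : ℂ) ^ 2) ^ 2 +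
        ((w : ℂ) + ((z : ℂ) + 2 * (x : ℂ) * (v : ℂ)) * Complex.I) ^ 2 ≠ 0) ↔
    2 * x ^ 2 + |z| < 1 := by
  have hI : Complex.I ^ 2 = -1 := Complex.I_sq
  have key : ∀ u v w : ℝ,
      (1 + ((u : ℂ) + (x : ℂ) * Complex.I) ^ 2 + (v : ℂ) ^ 2) ^ 2 +
        ((w : ℂ) + ((z : ℂ) + 2 * (x : ℂ) * (v : ℂ)) * Complex.I) ^ 2 =
      (((u ^ 2 + (v - x) ^ 2 + 1 - 2 * x ^ 2 - z : ℝ) : ℂ)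
          + ((2 * u * x + w : ℝ) : ℂ) * Complex.I) *
      (((u ^ 2 + (v + x) ^ 2 + 1 - 2 * x ^ 2 + z : ℝ) : ℂ)
          + ((2 * u * x - w : ℝ) : ℂ) * Complex.I) := by
    intro u v w
    have h1 : (1 + ((u : ℂ) + (x : ℂ) * Complex.I) ^ 2 + (v : ℂ) ^ 2) =
        (1 + u ^ 2 - x ^ 2 + v ^ 2) + 2 * u * x * Complex.I := by
      linear_combination (x : ℂ) ^ 2 * hI
    rw [h1]
    push_cast
    linear_combination (w ^ 2 + (z + 2 * x * v) ^ 2 : ℂ) * hI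
  constructor
  · intro h
    by_contra hc
    push Not at hc
    rcases abs_cases z with ⟨hz, _⟩ | ⟨hz, _⟩ <;> rw [hz] at hc
    · have hs : √(2 * x ^ 2 + z - 1) ^ 2 = 2 * x ^ 2 + z - 1 := Real.sq_sqrt (by linarith)
      apply h (√(2 * x ^ 2 + z - 1)) x (-(2 * √(2 * x ^ 2 + z - 1) * x))
      rw [key, hs]
      ring_nf
      simp
    · have hs : √(2 * x ^ 2 - z - 1) ^ 2 = 2 * x ^ 2 - z - 1 := Real.sq_sqrt (by linarith)
      apply h (√(2 * x ^ 2 - z - 1)) (-x) (2 * √(2 * x ^ 2 - z - 1) * x)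
      rw [key, hs]
      ring_nf
      simp
  · intro h u v w h0
    rw [key] at h0
    have a1 := le_abs_self z
    have a2 := neg_abs_le z
    rcases mul_eq_zero.mp h0 with h0 | h0
    all_goals
      have h2 := congrArg Complex.re h0
      rw [Complex.add_re, Complex.re_ofReal_mul, Complex.I_re, Complex.ofReal_re,
        Complex.zero_re] at h2
      nlinarith [sq_nonneg u, sq_nonneg (v - x), sq_nonneg (v + x)]
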